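/- arXiv:1312.6195 — 2 statements merged into one kernel-verified Lean document; each statement's English description precedes it below -/
import Mathlib

section
/- Logarithmic potential of the equilibrium density: for every real x ≥ 0, the probability density ψ(y) = 1/(π(y+1)√y) on (0,∞) satisfies ∫_0^∞ log|x − y| ψ(y) dy = log(x+1). In particular ψ integrates to 1 over (0,∞). -/
open MeasureTheory

namespace ELP
open Real Set

lemma inj : InjOn (fun t : ℝ => tan t ^ 2) (Ioo 0 (π/2)) := by
  intro s hs t ht h
  have h1 := tan_pos_of_pos_of_lt_pi_div_two hs.1 hs.2
  have h2 := tan_pos_of_pos_of_lt_pi_div_two ht.1 ht.2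
  have h3 : tan s = tan t := (pow_left_inj₀ h1.le h2.le two_ne_zero).1 h
  exact injOn_tan ⟨by linarith [hs.1, hs.2], hs.2⟩ ⟨by linarith [ht.1, ht.2], ht.2⟩ h3

lemma image : (fun t : ℝ => tan t ^ 2) '' (Ioo 0 (π/2)) = Ioi 0 := by
  ext y
  constructor
  · rintro ⟨t, ht, rfl⟩
    have := tan_pos_of_pos_of_lt_pi_div_two ht.1 ht.2
    simp only [mem_Ioi]; positivity
  · intro hy
    refine ⟨arctan (√y), ⟨arctan_pos.2 (sqrt_pos.2 hy), arctan_lt_pi_div_two _⟩, ?_⟩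
    simp [tan_arctan, sq_sqrt (le_of_lt hy)]

lemma hder (t : ℝ) (ht : t ∈ Ioo 0 (π/2)) :
    HasDerivWithinAt (fun t : ℝ => tan t ^ 2) (2 * tan t * (1 / cos t ^ 2)) (Ioo 0 (π/2)) t := by
  have hc : cos t ≠ 0 := (cos_pos_of_mem_Ioo ⟨by linarith [ht.1, ht.2], ht.2⟩).ne'
  have := ((hasDerivAt_tan hc).pow 2).hasDerivWithinAt (s := Ioo 0 (π/2))
  simpa using! this

lemma jac (t : ℝ) (ht : t ∈ Ioo 0 (π/2)) :
    |2 * tan t * (1 / cos t ^ 2)| * (π * (tan t ^ 2 + 1) * √(tan t ^ 2))⁻¹ = 2 / π := by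
  have hc : 0 < cos t := (cos_pos_of_mem_Ioo ⟨by linarith [ht.1, ht.2], ht.2⟩)
  have h1 := tan_pos_of_pos_of_lt_pi_div_two ht.1 ht.2
  rw [sqrt_sq h1.le, abs_of_pos (by positivity)]
  have : tan t ^ 2 + 1 = 1 / cos t ^ 2 := by
    rw [add_comm, ← inv_one_add_tan_sq hc.ne']; simp
  rw [this]
  have := pi_pos
  field_simp

lemma per : Function.Periodic (fun t => log (sin t)) π := by
  intro t; simp [sin_add_pi]

lemma ii (a b : ℝ) : IntervalIntegrable (fun t => log (sin t)) volume a b :=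
  intervalIntegrable_log_sin

lemma ic (a b : ℝ) : IntervalIntegrable (fun t => log (cos t)) volume a b :=
  intervalIntegrable_log_cos

lemma i1 (a : ℝ) : IntervalIntegrable (fun t => log (sin (a - t))) volume 0 (π/2) := by
  simpa using (ii a (a - π/2)).comp_sub_left a

lemma i2 (a : ℝ) : IntervalIntegrable (fun t => log (sin (a + t))) volume 0 (π/2) := by
  simpa using (ii a (a + π/2)).comp_add_left a

lemma int_cos : ∫ t in (0:ℝ)..(π/2), log (cos t) = - log 2 * π / 2 := by
  rw [← integral_log_sin_zero_pi_div_two]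
  have := intervalIntegral.integral_comp_sub_left (a := 0) (b := π/2)
    (fun t => log (sin t)) (π/2)
  simpa [sin_pi_div_two_sub] using this

lemma int_sin (a : ℝ) : (∫ t in (0:ℝ)..(π/2), log (sin (a - t))) +
    ∫ t in (0:ℝ)..(π/2), log (sin (a + t)) = - log 2 * π := by
  rw [intervalIntegral.integral_comp_sub_left (fun t => log (sin t)) a,
    intervalIntegral.integral_comp_add_left (fun t => log (sin t)) a, sub_zero, add_zero,
    intervalIntegral.integral_add_adjacent_intervals (ii _ _) (ii _ _)]
  have := per.intervalIntegral_add_eq (a - π/2) 0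
  rw [show a + π/2 = a - π/2 + π by ring, this, zero_add, integral_log_sin_zero_pi]

noncomputable def F (a t : ℝ) : ℝ :=
  2 / π * (log (sin (a - t)) + log (sin (a + t)) - 2 * log (cos a) - 2 * log (cos t))

lemma iF (a : ℝ) : IntervalIntegrable (F a) volume 0 (π/2) :=
  (((((i1 a).add (i2 a)).sub intervalIntegrable_const).sub ((ic _ _).const_mul 2))).const_mul _

lemma intF (a : ℝ) : ∫ t in (0:ℝ)..(π/2), F a t = - 2 * log (cos a) := by
  unfold F
  rw [intervalIntegral.integral_const_mul,
    intervalIntegral.integral_sub (((i1 a).add (i2 a)).sub intervalIntegrable_const)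
      ((ic _ _).const_mul 2),
    intervalIntegral.integral_sub ((i1 a).add (i2 a)) intervalIntegrable_const,
    intervalIntegral.integral_add (i1 a) (i2 a), int_sin,
    intervalIntegral.integral_const_mul, intervalIntegral.integral_const_mul, int_cos,
    intervalIntegral.integral_const]
  have := pi_pos
  simp only [smul_eq_mul]
  field_simp
  ring

lemma pt (a t : ℝ) (ha : 0 ≤ a) (ha' : a < π/2) (ht : t ∈ Ioo 0 (π/2)) (hne : t ≠ a) :
    |2 * tan t * (1 / cos t ^ 2)| •
      (log |tan a ^ 2 - tan t ^ 2| / (π * (tan t ^ 2 + 1) * √(tan t ^ 2))) = F a t := by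
  obtain ⟨h0, h1⟩ := ht
  have hc : 0 < cos t := cos_pos_of_mem_Ioo ⟨by linarith, h1⟩
  have hca : 0 < cos a := cos_pos_of_mem_Ioo ⟨by linarith, ha'⟩
  have hs : sin (a - t) ≠ 0 := by
    intro h
    have := (sin_eq_zero_iff_of_lt_of_lt (by linarith) (by linarith)).1 h
    exact hne (by linarith)
  have hs' : sin (a + t) ≠ 0 := (sin_pos_of_pos_of_lt_pi (by linarith) (by linarith)).ne'
  have key : tan a ^ 2 - tan t ^ 2 = sin (a - t) * sin (a + t) / (cos a ^ 2 * cos t ^ 2) := by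
    rw [tan_eq_sin_div_cos, tan_eq_sin_div_cos, sin_sub, sin_add]
    field_simp
    ring
  rw [smul_eq_mul, div_eq_mul_inv (log _), mul_left_comm, jac t ⟨h0, h1⟩, log_abs, key,
    log_div (mul_ne_zero hs hs') (by positivity), log_mul hs hs',
    log_mul (by positivity) (by positivity), log_pow, log_pow, F]
  push_cast
  ring

end ELP

open ELP in
theorem equilibrium_log_potential :
    (∀ x : ℝ, 0 ≤ x →
      IntegrableOn
        (fun y : ℝ => Real.log |x - y| / (Real.pi * (y + 1) * Real.sqrt y))
        (Set.Ioi 0) volume ∧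
      ∫ y in Set.Ioi (0 : ℝ),
          Real.log |x - y| / (Real.pi * (y + 1) * Real.sqrt y) =
        Real.log (x + 1)) ∧
    ∫ y in Set.Ioi (0 : ℝ), (Real.pi * (y + 1) * Real.sqrt y)⁻¹ = 1 := by
  have hpi := Real.pi_pos
  constructor
  · intro x hx
    obtain ⟨a, ha, ha', rfl⟩ : ∃ a, 0 ≤ a ∧ a < Real.pi / 2 ∧ Real.tan a ^ 2 = x :=
      ⟨Real.arctan (Real.sqrt x), Real.arctan_nonneg.2 (Real.sqrt_nonneg x),
        Real.arctan_lt_pi_div_two _, by rw [Real.tan_arctan, Real.sq_sqrt hx]⟩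
    have hca : 0 < Real.cos a := Real.cos_pos_of_mem_Ioo ⟨by linarith, ha'⟩
    have hae : ∀ᵐ t ∂(volume.restrict (Set.Ioo 0 (Real.pi / 2))), 
        |2 * Real.tan t * (1 / Real.cos t ^ 2)| •
      (Real.log |Real.tan a ^ 2 - Real.tan t ^ 2| /
        (Real.pi * (Real.tan t ^ 2 + 1) * Real.sqrt (Real.tan t ^ 2))) = F a t := by
      filter_upwards [ae_restrict_mem measurableSet_Ioo,
        ae_restrict_of_ae (Measure.ae_ne volume a)] with t ht hne
      exact pt a t ha ha' ht hne
    rw [← image]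
    constructor
    · rw [integrableOn_image_iff_integrableOn_abs_deriv_smul measurableSet_Ioo hder inj]
      refine Integrable.congr ?_ (Filter.EventuallyEq.symm hae)
      exact ((intervalIntegrable_iff_integrableOn_Ioo_of_le (by positivity)).1 (iF a))
    · rw [integral_image_eq_integral_abs_deriv_smul measurableSet_Ioo hder inj,
        integral_congr_ae hae, ← integral_Ioc_eq_integral_Ioo,
        ← intervalIntegral.integral_of_le (by positivity), intF, add_comm,
        show 1 + Real.tan a ^ 2 = (Real.cos a ^ 2)⁻¹ by
          rw [← Real.inv_one_add_tan_sq hca.ne', inv_inv], Real.log_inv, Real.log_pow]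
      push_cast
      ring
  · rw [← image, integral_image_eq_integral_abs_deriv_smul measurableSet_Ioo hder inj,
      setIntegral_congr_fun measurableSet_Ioo (g := fun _ => 2 / Real.pi)
        (fun t ht => by simpa only [smul_eq_mul] using jac t ht)]
    simp
    rw [max_eq_left (by positivity)]
    field_simp
end

section
/- Obrechkoff's theorem: let p be a polynomial of degree n ≥ 1 over ℂ all of whose coefficients are real and strictly positive, and for 0 ≤ α < π let C_α = {z ∈ ℂ : z ≠ 0 and |arg z| ≤ α} be the closed cone of half-angle α around the positive real axis. Then the number of zeros of p in C_α, counted with multiplicity, is at most (2α/π)·n. In particular p has no zeros in (0,∞). -/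
open MeasureTheory ProbabilityTheory Filter Polynomial
open scoped ENNReal NNReal Classical

noncomputable section

/-- Polynomials of positive degree with all coefficients real and strictly positive. -/
def polPos (p : Polynomial ℂ) : Prop :=
  0 < p.natDegree ∧ ∀ i ≤ p.natDegree, (p.coeff i).im = 0 ∧ 0 < (p.coeff i).re

/-- Empirical measure of the zeros of a polynomial (counted with multiplicity). -/
def zeroMeasure (p : Polynomial ℂ) : Measure ℂ :=
  (p.natDegree : ℝ≥0∞)⁻¹ • (p.roots.map MeasureTheory.Measure.dirac).sum

/-- The closure of the set of empirical zero measures of polynomials with positive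
coefficients, inside the space of probability measures with the weak topology. -/
def calP : Set (ProbabilityMeasure ℂ) :=
  closure {μ : ProbabilityMeasure ℂ |
    ∃ p : Polynomial ℂ, polPos p ∧ (μ : Measure ℂ) = zeroMeasure p}

/-- The kernel f(z,w) = log|1-z| + log|1-w| - log|z-w|. -/
def fker (z w : ℂ) : ℝ :=
  Real.log ‖1 - z‖ + Real.log ‖1 - w‖
    - Real.log ‖z - w‖

/-- The double integral ∬ f dμ dμ, as an extended real number: the (Lebesgue)
integral of the positive part minus that of the negative part. -/
def doubleInt (μ : Measure ℂ) : EReal :=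
  ((∫⁻ q : ℂ × ℂ, ENNReal.ofReal (fker q.1 q.2) ∂(μ.prod μ) : ℝ≥0∞) : EReal)
    - ((∫⁻ q : ℂ × ℂ, ENNReal.ofReal (-(fker q.1 q.2)) ∂(μ.prod μ) : ℝ≥0∞) : EReal)

/-- The large deviations rate function. -/
def rateI (μ : ProbabilityMeasure ℂ) : EReal :=
  if μ ∈ calP then (2 : EReal)⁻¹ * doubleInt (μ : Measure ℂ) else ⊤

end


lemma ob_sv (m : ℕ → ℕ) (hm : Monotone m) : ∀ (d : ℕ) (P : Polynomial ℝ), P.natDegree ≤ d →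
    (∀ j, 0 ≤ (-1:ℝ)^(m j) * P.coeff j) → P.signVariations ≤ m P.natDegree := by
  intro d
  induction d using Nat.strong_induction_on with
  | _ d ih =>
  intro P hd hP
  by_cases h0 : P = 0
  · simp [h0]
  rw [Polynomial.signVariations_eq_eraseLead_add_ite h0]
  by_cases h1 : P.eraseLead = 0
  · have : SignType.sign P.leadingCoeff ≠ 0 := by simpa using h0
    simp [h1, h0]
  have hlt : P.eraseLead.natDegree < P.natDegree := by
    rcases Polynomial.eraseLead_natDegree_lt_or_eraseLead_eq_zero P with h | h
    · exact h
    · exact absurd h h1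
  have hco : P.eraseLead.leadingCoeff = P.coeff P.eraseLead.natDegree := by
    rw [Polynomial.leadingCoeff, Polynomial.eraseLead_coeff_of_ne _ hlt.ne]
  have hI := ih P.eraseLead.natDegree (by omega) P.eraseLead le_rfl (by
    intro j
    rw [Polynomial.eraseLead_coeff]
    split_ifs
    · simp
    · exact hP j)
  have hmm := hm hlt.le
  split_ifs with hs
  · have hne : m P.eraseLead.natDegree ≠ m P.natDegree := by
      intro he
      have a1 := hP P.natDegree
      have a2 := hP P.eraseLead.natDegree
      rw [← hco] at a2
      have b2 : P.eraseLead.leadingCoeff ≠ 0 := by simpa using h1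
      rw [he] at a2
      change 0 ≤ _ * P.leadingCoeff at a1
      rw [← Left.sign_neg] at hs
      rcases lt_or_gt_of_ne b2 with h | h
      · rw [sign_pos (by linarith : 0 < - P.eraseLead.leadingCoeff), sign_eq_one_iff] at hs
        rcases neg_one_pow_eq_or ℝ (m P.natDegree) with e | e <;> rw [e] at a1 a2 <;> linarith
      · rw [sign_neg (by linarith : - P.eraseLead.leadingCoeff < 0), sign_eq_neg_one_iff] at hs
        rcases neg_one_pow_eq_or ℝ (m P.natDegree) with e | e <;> rw [e] at a1 a2 <;> linarith
    omega
  · omega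

lemma ob_sin (x : ℝ) (hx : 0 ≤ x) : 0 ≤ (-1:ℝ)^(⌊x / Real.pi⌋₊) * Real.sin x := by
  set m := ⌊x / Real.pi⌋₊
  have h1 : (m:ℝ) ≤ x / Real.pi := Nat.floor_le (by positivity)
  have h2 : x / Real.pi < m + 1 := Nat.lt_floor_add_one _
  rw [le_div_iff₀ Real.pi_pos] at h1
  rw [div_lt_iff₀ Real.pi_pos] at h2
  have h3 : Real.sin x = (-1)^m * Real.sin (x - m * Real.pi) := by
    rw [← Real.sin_add_nat_mul_pi]; congr 1; ring
  rw [h3, ← mul_assoc, ← mul_pow]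
  simp
  apply Real.sin_nonneg_of_nonneg_of_le_pi <;> linarith

lemma ob_prod (s : Multiset ℂ) : s.prod = ((s.map (fun z => ‖z‖)).prod : ℝ) *
    Complex.exp (((s.map Complex.arg).sum : ℝ) * Complex.I) := by
  induction s using Multiset.induction_on with
  | empty => simp
  | cons a s ih =>
    simp only [Multiset.prod_cons, Multiset.map_cons, Multiset.sum_cons]
    rw [ih]
    conv_lhs => rw [← Complex.norm_mul_exp_arg_mul_I a]
    push_cast
    rw [add_mul, Complex.exp_add]
    ring

lemma ob_arg1 (ρ θ : ℝ) (hρ : 0 < ρ) (h1 : -Real.pi < θ) (h2 : θ ≤ Real.pi) :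
    Complex.arg (ρ * Complex.exp (θ * Complex.I)) = θ := by
  rw [Complex.exp_mul_I]
  exact Complex.arg_mul_cos_add_sin_mul_I hρ ⟨h1, h2⟩

lemma ob_arg (z : ℂ) (a : ℝ) (hz : z ≠ 0) (h0 : z.arg ≠ 0) (ha0 : 0 < a) (ha : a < Real.pi)
    (hza : z.arg ≠ a) :
    Complex.arg (-(z * Complex.exp (-(a * Complex.I)))) =
      Complex.arg (-z) - a + if 0 < z.arg ∧ z.arg < a then 2 * Real.pi else 0 := by
  have hz' := Complex.norm_mul_exp_arg_mul_I z
  have hρ : 0 < ‖z‖ := norm_pos_iff.2 hz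
  have l1 := Complex.neg_pi_lt_arg z
  have l2 := Complex.arg_le_pi z
  set t := z.arg
  set ρ := ‖z‖
  have e1 : Complex.exp (-(Real.pi * Complex.I)) = -1 := by
    rw [Complex.exp_neg, Complex.exp_pi_mul_I]; norm_num
  have em : ∀ x : ℝ, -((ρ:ℂ) * Complex.exp (x * Complex.I)) =
      ρ * Complex.exp ((x - Real.pi : ℝ) * Complex.I) := by
    intro x; push_cast; rw [sub_mul, sub_eq_add_neg, Complex.exp_add, e1]; ring
  have ep : ∀ x : ℝ, -((ρ:ℂ) * Complex.exp (x * Complex.I)) =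
      ρ * Complex.exp ((x + Real.pi : ℝ) * Complex.I) := by
    intro x; push_cast; rw [add_mul, Complex.exp_add, Complex.exp_pi_mul_I]; ring
  have ez : z * Complex.exp (-(a * Complex.I)) = ρ * Complex.exp ((t - a : ℝ) * Complex.I) := by
    rw [← hz']; push_cast; rw [sub_mul, sub_eq_add_neg, Complex.exp_add]; ring
  have hpi := Real.pi_pos
  rw [ez]
  conv_rhs => rw [← hz']
  rcases lt_or_gt_of_ne h0 with h | h
  · rw [ep, ep, ob_arg1 _ _ hρ (by linarith) (by linarith), ob_arg1 _ _ hρ (by linarith) (by linarith),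
      if_neg (by intro h; linarith [h.1])]
    ring
  · rw [em t, ob_arg1 _ _ hρ (by linarith) (by linarith)]
    rcases lt_or_gt_of_ne hza with h' | h'
    · rw [ep, ob_arg1 _ _ hρ (by linarith) (by linarith), if_pos ⟨h, h'⟩]; ring
    · rw [em, ob_arg1 _ _ hρ (by linarith) (by linarith), if_neg (by intro h; linarith [h.2])]; ring

lemma ob_conj (p : Polynomial ℂ) (hp : polPos p) :
    p.roots.map (starRingEnd ℂ) = p.roots := by
  have : p.map (starRingEnd ℂ) = p := by
    ext i
    rw [Polynomial.coeff_map]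
    by_cases h : i ≤ p.natDegree
    · exact Complex.conj_eq_iff_im.2 (hp.2 i h).1
    · rw [Polynomial.coeff_eq_zero_of_natDegree_lt (by omega)]; simp
  conv_rhs => rw [← this]
  rw [(IsAlgClosed.splits p).roots_map]

lemma ob_pos (p : Polynomial ℂ) (hp : polPos p) (x : ℝ) (hx : 0 ≤ x) : p.eval (x : ℂ) ≠ 0 := by
  intro h
  have h2 : (p.eval (x:ℂ)).re = ∑ i ∈ Finset.range (p.natDegree + 1), (p.coeff i).re * x ^ i := by
    rw [Polynomial.eval_eq_sum_range, Complex.re_sum]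
    apply Finset.sum_congr rfl
    intro i _
    rw [← Complex.ofReal_pow, Complex.re_mul_ofReal]
  have h3 : (p.coeff 0).re * x ^ 0 ≤ ∑ i ∈ Finset.range (p.natDegree + 1), (p.coeff i).re * x ^ i := by
    apply Finset.single_le_sum (f := fun i => (p.coeff i).re * x ^ i)
    · intro i hi
      have := (hp.2 i (by simp at hi; omega)).2
      positivity
    · simp
  rw [← h2, h] at h3
  have := (hp.2 0 (by omega)).2
  simp at h3
  linarith

lemma ob_arg_ne (p : Polynomial ℂ) (hp : polPos p) (z : ℂ) (hz : z ∈ p.roots) :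
    z ≠ 0 ∧ z.arg ≠ 0 := by
  have hz := (Polynomial.mem_roots'.1 hz).2
  refine ⟨?_, ?_⟩
  · rintro rfl
    exact ob_pos p hp 0 le_rfl (by simpa using hz)
  · intro h
    rw [Complex.arg_eq_zero_iff] at h
    apply ob_pos p hp z.re h.1
    have : (z.re : ℂ) = z := Complex.ext rfl (by simp [h.2])
    rw [this]; exact hz

lemma ob_sum0 (p : Polynomial ℂ) (hp : polPos p) :
    (p.roots.map (fun z => Complex.arg (-z))).sum = 0 := by
  have h : (p.roots.map (fun z => Complex.arg (-z))).sum
      = (p.roots.map (fun z => - Complex.arg (-z))).sum := by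
    conv_lhs => rw [← ob_conj p hp, Multiset.map_map]
    congr 1
    apply Multiset.map_congr rfl
    intro z hz
    obtain ⟨h1, h2⟩ := ob_arg_ne p hp z hz
    simp only [Function.comp]
    rw [← map_neg, Complex.arg_conj, if_neg]
    intro h3
    apply h2
    rw [Complex.arg_eq_pi_iff] at h3
    rw [Complex.arg_eq_zero_iff]
    simp at h3
    exact ⟨h3.1.le, h3.2⟩
  rw [Multiset.sum_map_neg] at h
  linarith

lemma ob_count (p : Polynomial ℂ) (hp : polPos p) (a : ℝ) (ha : a < Real.pi) :
    p.roots.countP (fun z => |z.arg| < a) =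
      2 * p.roots.countP (fun z => 0 < z.arg ∧ z.arg < a) := by
  have h1 : p.roots.countP (fun z => 0 < z.arg ∧ z.arg < a) =
      p.roots.countP (fun z => -a < z.arg ∧ z.arg < 0) := by
    conv_rhs => rw [← ob_conj p hp, Multiset.countP_map, ← Multiset.countP_eq_card_filter]
    apply Multiset.countP_congr rfl
    intro z hz
    rw [Complex.arg_conj]
    have := Real.pi_pos
    split_ifs with h
    · simp [h]; constructor
      · intro h; linarith
      · intro h; linarith
    · simp; tauto
  have h2 : p.roots.countP (fun z => |z.arg| < a) =
    p.roots.countP (fun z => 0 < z.arg ∧ z.arg < a) +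
      p.roots.countP (fun z => -a < z.arg ∧ z.arg < 0) := by
    simp only [Multiset.countP_eq_card_filter]
    rw [← Multiset.card_add, Multiset.filter_add_filter]
    rw [Multiset.card_add]
    rw [(Multiset.filter_eq_nil (s := p.roots)
      (p := fun z : ℂ => (0 < z.arg ∧ z.arg < a) ∧ -a < z.arg ∧ z.arg < 0)).2]
    · rw [Multiset.card_zero, add_zero]
      congr 1
      apply Multiset.filter_congr
      intro z hz
      have := (ob_arg_ne p hp z hz).2
      rw [abs_lt]
      constructor
      · rintro ⟨h1, h2⟩
        rcases lt_or_gt_of_ne this with h | h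
        · right; exact ⟨h1, h⟩
        · left; exact ⟨h, h2⟩
      · rintro (⟨h1, h2⟩ | ⟨h1, h2⟩) <;> constructor <;> linarith
    · rintro z hz ⟨⟨h1, h2⟩, h3, h4⟩
      linarith
  omega

lemma ob_cont (w : ℂ) (hw : w.im ≠ 0 ∨ w.re < 0) :
    ContinuousOn (fun s : ℝ => Complex.arg ((s:ℂ) - (1 - s) * w)) (Set.Icc 0 1) := by
  intro s hs
  apply ContinuousAt.continuousWithinAt
  have hmem : ((s:ℂ) - (1 - s) * w) ∈ Complex.slitPlane := by
    rw [Complex.mem_slitPlane_iff]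
    simp
    rcases eq_or_lt_of_le hs.2 with h | h
    · left; simp [h]
    · rcases hw with hw | hw
      · right
        exact ⟨by linarith, hw⟩
      · left
        nlinarith [hs.1]
  exact (Complex.continuousAt_arg hmem).comp (f := fun s : ℝ => (s:ℂ) - (1 - s) * w)
    (by fun_prop)

lemma ob_cont_sum (R : Multiset ℂ) (S : Set ℝ) (f : ℂ → ℝ → ℝ) (hf : ∀ w ∈ R, ContinuousOn (f w) S) :
    ContinuousOn (fun s => (R.map (fun w => f w s)).sum) S := by
  induction R using Multiset.induction_on with
  | empty => simp; exact continuousOn_const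
  | cons a R ih =>
    simp only [Multiset.map_cons, Multiset.sum_cons]
    exact (hf a (by simp)).add (ih (fun w hw => hf w (by simp [hw])))

lemma ob_main (p : Polynomial ℂ) (hp : polPos p) (a : ℝ) (ha0 : 0 < a) (ha : a < Real.pi)
    (hna : ∀ z ∈ p.roots, |z.arg| ≠ a) :
    p.roots.countP (fun z => 0 < z.arg ∧ z.arg < a) ≤ ⌊p.natDegree * a / Real.pi⌋₊ := by
  have hpi := Real.pi_pos
  set n := p.natDegree with hn
  set k := p.roots.countP (fun z => 0 < z.arg ∧ z.arg < a) with hk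
  set F := ⌊n * a / Real.pi⌋₊ with hF
  have hcard : Multiset.card p.roots = n := (IsAlgClosed.splits p).natDegree_eq_card_roots.symm
  set W : ℂ → ℂ := fun z => z * Complex.exp (-(a * Complex.I)) with hW
  set Ψ : ℝ → ℝ := fun s => (p.roots.map (fun z => Complex.arg ((s:ℂ) - (1 - s) * W z))).sum with hΨ
  have hcont : ContinuousOn Ψ (Set.Icc 0 1) := by
    apply ob_cont_sum p.roots (Set.Icc 0 1) (fun z s => Complex.arg ((s:ℂ) - (1 - s) * W z))
    intro z hz
    apply ob_cont
    by_contra hcon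
    push Not at hcon
    have hWr : W z = ((W z).re : ℂ) := Complex.ext (by simp) (by simp [hcon.1])
    have hzW : z = ((W z).re : ℝ) * Complex.exp (a * Complex.I) := by
      rw [← hWr, hW]
      simp only
      rw [mul_assoc, ← Complex.exp_add]; simp
    have hz0 := (ob_arg_ne p hp z hz).1
    have hWp : 0 < (W z).re := by
      rcases eq_or_lt_of_le hcon.2 with h | h
      · exfalso; apply hz0; rw [hzW, ← h]; simp
      · exact h
    apply hna z hz
    rw [hzW, ob_arg1 _ _ hWp (by linarith) (by linarith), abs_of_pos ha0]
  have hΨ1 : Ψ 1 = 0 := by simp [hΨ]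
  have hΨ0 : Ψ 0 = 2 * Real.pi * k - n * a := by
    have h1 : Ψ 0 = (p.roots.map (fun z => Complex.arg (-z) +
        (-a + if 0 < z.arg ∧ z.arg < a then 2 * Real.pi else 0))).sum := by
      simp only [hΨ]
      congr 1
      apply Multiset.map_congr rfl
      intro z hz
      have h := ob_arg_ne p hp z hz
      have := ob_arg z a h.1 h.2 ha0 ha (by
        intro he; apply hna z hz; rw [he, abs_of_pos ha0])
      rw [← add_assoc, ← sub_eq_add_neg, ← this]
      congr 1
      simp [hW]
    rw [h1, Multiset.sum_map_add, ob_sum0 p hp, Multiset.sum_map_add]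
    have h2 : ∀ R : Multiset ℂ, (R.map (fun z : ℂ => if 0 < z.arg ∧ z.arg < a then 2 * Real.pi else 0)).sum
        = 2 * Real.pi * (R.countP (fun z => 0 < z.arg ∧ z.arg < a) : ℕ) := by
      intro R
      induction R using Multiset.induction_on with
      | empty => simp
      | cons b R ih =>
        rw [Multiset.map_cons, Multiset.sum_cons, ih, Multiset.countP_cons]
        split_ifs <;> push_cast <;> ring
    rw [h2, Multiset.map_const', Multiset.sum_replicate, hcard, ← hk, nsmul_eq_mul]
    ring
  -- the polynomial of imaginary parts
  set Q : Polynomial ℝ := ∑ j ∈ Finset.range (n + 1),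
    Polynomial.monomial j ((p.coeff j).re * Real.sin (j * a)) with hQ
  have hQc : ∀ i, Q.coeff i = if i < n + 1 then (p.coeff i).re * Real.sin (i * a) else 0 := by
    intro i
    simp [hQ, Polynomial.coeff_monomial]
  have hQe : ∀ r : ℝ, Q.eval r = (p.eval ((r:ℂ) * Complex.exp (a * Complex.I))).im := by
    intro r
    rw [Polynomial.eval_eq_sum_range (p := p), Complex.im_sum, hQ, Polynomial.eval_finset_sum]
    apply Finset.sum_congr rfl
    intro i hi
    have hc : p.coeff i = ((p.coeff i).re : ℂ) :=
      Complex.ext (by simp) (by simp [(hp.2 i (by simp at hi; omega)).1])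
    have he : p.coeff i * ((r:ℂ) * Complex.exp (a * Complex.I)) ^ i =
        (((p.coeff i).re * r ^ i : ℝ) : ℂ) * Complex.exp ((i * a : ℝ) * Complex.I) := by
      rw [mul_pow, ← Complex.exp_nat_mul]
      conv_lhs => rw [hc]
      push_cast
      rw [mul_assoc (i:ℂ)]
      ring
    rw [he, Complex.im_ofReal_mul, Complex.exp_ofReal_mul_I_im, Polynomial.eval_monomial]
    ring
  have hQ0 : Q ≠ 0 := by
    intro h
    have h1 := hQc 1
    have hn1 : 1 ≤ n := hp.1
    rw [h, if_pos (by omega)] at h1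
    have := (hp.2 1 hn1).2
    have h2 := Real.sin_pos_of_pos_of_lt_pi ha0 ha
    simp at h1
    rcases h1 with h1 | h1 <;> linarith
  have hroot : ∀ s : ℝ, s < 1 → ∀ j : ℕ, Ψ s = j * Real.pi - n * a → Q.eval (s / (1 - s)) = 0 := by
    intro s hs j hj
    rw [hQe]
    have hev := congrArg (Polynomial.eval (((s / (1 - s) : ℝ):ℂ) * Complex.exp (a * Complex.I)))
      (IsAlgClosed.splits p).eq_prod_roots
    rw [Polynomial.eval_mul, Polynomial.eval_C, Polynomial.eval_multiset_prod, Multiset.map_map] at hev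
    have hs1 : (1 - (s:ℂ)) ≠ 0 := by
      have : (1 - s) ≠ 0 := by linarith
      exact_mod_cast this
    have hprod : (p.roots.map (Polynomial.eval (((s / (1 - s) : ℝ):ℂ) * Complex.exp (a * Complex.I)) ∘
        fun z => X - C z)).prod =
        (Complex.exp (a * Complex.I) / (1 - s)) ^ n *
         (p.roots.map (fun z => (s:ℂ) - (1 - s) * W z)).prod := by
      rw [← hcard, ← Multiset.prod_replicate, ← Multiset.map_const', ← Multiset.prod_map_mul]
      congr 1
      apply Multiset.map_congr rfl
      intro z _
      simp only [Function.comp, Polynomial.eval_sub, Polynomial.eval_X, Polynomial.eval_C, hW]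
      have he : Complex.exp (-(a * Complex.I)) * Complex.exp (a * Complex.I) = 1 := by
        rw [← Complex.exp_add]; simp
      push_cast
      field_simp
      linear_combination (1 - (s:ℂ)) * z * he
    rw [hev, hprod, ob_prod, Multiset.map_map, Multiset.map_map]
    have hΨs : (p.roots.map (Complex.arg ∘ fun z => (s:ℂ) - (1 - s) * W z)).sum = Ψ s := rfl
    rw [hΨs, hj, div_pow, ← Complex.exp_nat_mul]
    have hlc : p.leadingCoeff = (p.leadingCoeff.re : ℂ) :=
      Complex.ext (by simp) (by simpa using (hp.2 p.natDegree le_rfl).1)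
    generalize (p.roots.map ((fun z : ℂ => ‖z‖) ∘ fun z => (s:ℂ) - (1 - s) * W z)).prod = M
    have hfin : p.leadingCoeff * (Complex.exp (n * (a * Complex.I)) / (1 - s) ^ n *
        (M * Complex.exp ((j * Real.pi - n * a : ℝ) * Complex.I))) =
        ((p.leadingCoeff.re * M / (1 - s) ^ n * (-1) ^ j : ℝ) : ℂ) := by
      have : Complex.exp (n * (a * Complex.I)) * Complex.exp ((j * Real.pi - n * a : ℝ) * Complex.I)
          = (-1) ^ j := by
        rw [← Complex.exp_add, ← Complex.exp_pi_mul_I, ← Complex.exp_nat_mul]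
        congr 1; push_cast; ring
      conv_lhs => rw [hlc]
      push_cast
      rw [← this]
      push_cast
      ring
    rw [hfin, Complex.ofReal_im]
  have hex : ∀ j : ℕ, F < j → j < 2 * k → ∃ s : ℝ, 0 < s ∧ s < 1 ∧ Ψ s = j * Real.pi - n * a := by
    intro j h1 h2
    have h1' : n * a < j * Real.pi := by
      have := (Nat.floor_lt (by positivity)).1 h1
      rwa [div_lt_iff₀ hpi] at this
    have h2' : j * Real.pi < 2 * k * Real.pi := by
      have : (j:ℝ) < 2 * k := by exact_mod_cast h2
      nlinarith
    obtain ⟨s, hs, hs'⟩ := intermediate_value_Ioo' (zero_le_one) hcont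
      (show j * Real.pi - n * a ∈ Set.Ioo (Ψ 1) (Ψ 0) by
        rw [hΨ1, hΨ0]; constructor <;> linarith)
    exact ⟨s, hs.1, hs.2, hs'⟩
  choose! σ hσ0 hσ1 hσ using hex
  have hroots : (Finset.Ioo F (2 * k)).card ≤ Q.roots.countP (0 < ·) := by
    have hinj : Set.InjOn (fun j : ℕ => σ j / (1 - σ j)) (Finset.Ioo F (2 * k)) := by
      intro i hi j hj hij
      simp only [Finset.coe_Ioo, Set.mem_Ioo] at hi hj
      have a1 := hσ1 i hi.1 hi.2
      have a2 := hσ1 j hj.1 hj.2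
      simp only at hij
      rw [div_eq_div_iff (by linarith) (by linarith)] at hij
      have he : σ i = σ j := by linarith
      have b1 := hσ i hi.1 hi.2
      have b2 := hσ j hj.1 hj.2
      rw [he, b2] at b1
      have : (j:ℝ) = i := by
        apply mul_right_cancel₀ hpi.ne'; linarith
      exact_mod_cast this.symm
    rw [← Finset.card_image_of_injOn hinj, Multiset.countP_eq_card_filter]
    refine le_trans (Finset.card_le_card ?_) (Multiset.toFinset_card_le _)
    intro r hr
    simp only [Finset.mem_image, Finset.mem_Ioo] at hr
    obtain ⟨j, hj, rfl⟩ := hr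
    rw [Multiset.mem_toFinset, Multiset.mem_filter, Polynomial.mem_roots hQ0]
    have a0 := hσ0 j hj.1 hj.2
    have a1 := hσ1 j hj.1 hj.2
    exact ⟨hroot _ a1 j (hσ j hj.1 hj.2), div_pos a0 (by linarith)⟩
  have hdes := Polynomial.roots_countP_pos_le_signVariations Q
  have hmono : Monotone (fun j : ℕ => ⌊(j:ℝ) * a / Real.pi⌋₊) := by
    intro i j hij
    apply Nat.floor_mono
    have : (i:ℝ) ≤ j := by exact_mod_cast hij
    gcongr
  have hsv := ob_sv _ hmono Q.natDegree Q le_rfl (by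
    intro j
    rw [hQc]
    split_ifs with h
    · have h1 := (hp.2 j (by omega)).2
      have h2 := ob_sin (j * a) (by positivity)
      have := mul_nonneg h1.le h2
      linarith
    · simp)
  have hdeg : Q.natDegree ≤ n := by
    rw [Polynomial.natDegree_le_iff_coeff_eq_zero]
    intro i hi
    rw [hQc, if_neg (by omega)]
  have hle : ⌊(Q.natDegree:ℝ) * a / Real.pi⌋₊ ≤ F := hmono hdeg
  rw [Nat.card_Ioo] at hroots
  have hdes' : Q.roots.countP (0 < ·) ≤ Q.signVariations := by convert hdes
  omega

/-- Obrechkoff's theorem: if `p` is a polynomial of degree `n ≥ 1` over `ℂ` all of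
whose coefficients are real and strictly positive, then for `0 ≤ α < π`, the number
of zeros of `p` (with multiplicity) in the closed cone
`C_α = {z ≠ 0 : |arg z| ≤ α}` is at most `(2α/π)·n`; in particular `p` has no zeros
in `(0,∞)`. -/
theorem obrechkoff (p : Polynomial ℂ) (hp : polPos p)
    (α : ℝ) (hα0 : 0 ≤ α) (hαπ : α < Real.pi) :
    ((Multiset.card
        (p.roots.filter (fun z => z ≠ 0 ∧ |Complex.arg z| ≤ α)) : ℝ) ≤
      2 * α / Real.pi * p.natDegree) ∧
    ∀ x : ℝ, 0 < x → p.eval (x : ℂ) ≠ 0 := by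
  refine ⟨?_, fun x hx => ob_pos p hp x hx.le⟩
  have hpi := Real.pi_pos
  set K := Multiset.card (p.roots.filter (fun z => z ≠ 0 ∧ |Complex.arg z| ≤ α)) with hK
  have hn : (0:ℝ) < p.natDegree := by exact_mod_cast hp.1
  by_contra hcon
  push Not at hcon
  have hlt : α < min Real.pi (K * Real.pi / (2 * p.natDegree)) := by
    rw [lt_min_iff]
    refine ⟨hαπ, ?_⟩
    rw [lt_div_iff₀ (by positivity)]
    rw [div_mul_eq_mul_div, div_lt_iff₀ hpi] at hcon
    linarith
  obtain ⟨a, ha, hna⟩ := (Set.Ioo_infinite hlt).exists_notMem_finset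
    ((p.roots.map (fun z => |z.arg|)).toFinset)
  have ha2 := lt_min_iff.1 ha.2
  have ha1 := ha.1
  have hm := ob_main p hp a (by linarith) ha2.1 (by
    intro z hz he
    apply hna
    rw [Multiset.mem_toFinset, Multiset.mem_map]
    exact ⟨z, hz, he⟩)
  have hc := ob_count p hp a ha2.1
  have hKle : K ≤ p.roots.countP (fun z => |z.arg| < a) := by
    rw [Multiset.countP_eq_card_filter, hK]
    apply Multiset.card_le_card
    apply Multiset.monotone_filter_right
    intro z hz
    linarith [hz.2]
  have hK2 : (K:ℝ) ≤ 2 * (p.natDegree * a / Real.pi) := by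
    have h1 : K ≤ 2 * ⌊p.natDegree * a / Real.pi⌋₊ := by omega
    have h2 : (⌊p.natDegree * a / Real.pi⌋₊ : ℝ) ≤ p.natDegree * a / Real.pi :=
      Nat.floor_le (div_nonneg (mul_nonneg hn.le (by linarith)) hpi.le)
    have h3 : (K:ℝ) ≤ 2 * (⌊p.natDegree * a / Real.pi⌋₊ : ℝ) := by exact_mod_cast h1
    linarith
  have h4 := ha2.2
  rw [lt_div_iff₀ (by positivity)] at h4
  rw [← mul_div_assoc, le_div_iff₀ hpi] at hK2
  linarith
end
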